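/- The continuous online algorithm cCHASE is 2-competitive for the fractional problem cSP: for every β > 0 and every choice of nonnegative cost functions g_1,…,g_T, the fractional schedule x with x_t = (β + Δ(t))/β satisfies CCost(x) ≤ 2·cOpt. -/

import Mathlib

/-- The fractional cost `CCost` of a schedule `x`: the operating cost at time
`t` is `(1 − x t)·g_t(0) + x t·g_t(1)`, plus the switching cost
`β·(x t − x (t−1))⁺`. (On binary schedules this is the discrete cost.) -/
noncomputable def cost (T : ℕ) (β : ℝ) (g0 g1 : ℕ → ℝ) (x : ℕ → ℝ) : ℝ :=
  ∑ t ∈ Finset.Icc 1 T, ((1 - x t) * g0 t + x t * g1 t + β * max (x t - x (t - 1)) 0)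

/-- The cumulative cost difference `Δ(t)`, with `Δ(0) = −β` and
`Δ(t) = min{0, max{−β, Δ(t−1) + (g_t(0) − g_t(1))}}`. -/
noncomputable def Δfun (β : ℝ) (g0 g1 : ℕ → ℝ) : ℕ → ℝ
  | 0 => -β
  | t + 1 => min 0 (max (-β) (Δfun β g0 g1 t + (g0 (t + 1) - g1 (t + 1))))

/-- The fractional offline optimal value `cOpt` of problem cSP: the infimum of
`CCost` over all fractional schedules in `[0,1]` starting at `0`. -/
noncomputable def copt (T : ℕ) (β : ℝ) (g0 g1 : ℕ → ℝ) : ℝ :=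
  sInf {c : ℝ | ∃ x : ℕ → ℝ, (∀ t, 0 ≤ x t ∧ x t ≤ 1) ∧ x 0 = 0 ∧ c = cost T β g0 g1 x}

/-! The schedule `x` of cCHASE is projected gradient descent on `[0, 1]` with step size `1 / β`:
`x (t + 1)` is the projection of `x t + (g0 (t + 1) - g1 (t + 1)) / β`. Let `p` and `q` be the
costs of the two states in one round, `a` and `a'` the states of cCHASE before and after its move,
and `y` and `y'` those of a competitor. The variational inequality of the projection,
`(p - q) * (y' - a') ≤ β * (a' - a) * (y' - a')`,
bounds twice the operating cost at `a'` by twice that at `y'` plus `2 * β * (a' - a) * (y' - a')`.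
With `a` in place of `y'` it says that `β` times the distance moved is at most the cost of the
state that cCHASE moves away from; hence one copy of its operating cost is at least
`β * max (a' - a) 0 - β * a' * (a' - a)`, which pays for the move. Two error terms remain:
`2 * β * y' * (a' - a)` is the decrease of `2 * β * y' * (1 - a)` when `a` becomes `a'`, and
replacing `y` by `y'` there costs at most twice the competitor's switching cost, while
`-β * a' * (a' - a)` is at most the decrease of `β * a ^ 2 / 2`. So the sum over rounds
telescopes. -/

open Set

theorem sub_projIcc_mul_sub_projIcc_nonpos {R : Type*} [Ring R] [LinearOrder R]
    [IsOrderedRing R] {l u : R} (h : l ≤ u) (z : R) {y : R} (hy : y ∈ Icc l u) :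
    (z - projIcc l u h z) * (y - projIcc l u h z) ≤ 0 := by
  rcases le_total z l with hzl | hlz
  · rw [projIcc_of_le_left h hzl]
    exact mul_nonpos_of_nonpos_of_nonneg (sub_nonpos.2 hzl) (sub_nonneg.2 hy.1)
  rcases le_total u z with huz | hzu
  · rw [projIcc_of_right_le h huz]
    exact mul_nonpos_of_nonneg_of_nonpos (sub_nonneg.2 huz) (sub_nonpos.2 hy.2)
  · rw [projIcc_of_mem h ⟨hlz, hzu⟩, sub_self, zero_mul]

/-- The fractional schedule played by the online algorithm cCHASE. -/
noncomputable def cchase (β : ℝ) (g0 g1 : ℕ → ℝ) (t : ℕ) : ℝ :=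
  (β + Δfun β g0 g1 t) / β

section cchase

variable {β : ℝ} {g0 g1 : ℕ → ℝ}

@[simp]
theorem cchase_zero : cchase β g0 g1 0 = 0 := by
  simp [cchase, Δfun]

theorem cchase_succ (hβ : 0 < β) (t : ℕ) :
    cchase β g0 g1 (t + 1) =
      projIcc 0 1 zero_le_one (cchase β g0 g1 t + (g0 (t + 1) - g1 (t + 1)) / β) := by
  rw [coe_projIcc, max_min_distrib_left, max_eq_right zero_le_one, cchase, cchase, Δfun,
    ← min_add_add_left, ← max_add_add_left, ← min_div_div_right hβ.le, ← max_div_div_right hβ.le,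
    add_zero, add_neg_cancel, zero_div, div_self hβ.ne', ← add_assoc, add_div (β + _)]

theorem cchase_mem_Icc (hβ : 0 < β) (t : ℕ) : cchase β g0 g1 t ∈ Icc (0 : ℝ) 1 := by
  cases t with
  | zero => simp
  | succ t => rw [cchase_succ hβ]; exact Subtype.coe_prop _

theorem mul_sub_cchase_succ_le (hβ : 0 < β) (t : ℕ) {z : ℝ} (hz : z ∈ Icc (0 : ℝ) 1) :
    (g0 (t + 1) - g1 (t + 1)) * (z - cchase β g0 g1 (t + 1)) ≤
      β * (cchase β g0 g1 (t + 1) - cchase β g0 g1 t) * (z - cchase β g0 g1 (t + 1)) := by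
  have hproj := sub_projIcc_mul_sub_projIcc_nonpos zero_le_one
    (cchase β g0 g1 t + (g0 (t + 1) - g1 (t + 1)) / β) hz
  rw [← cchase_succ hβ] at hproj
  have hscaled := mul_nonpos_of_nonneg_of_nonpos hβ.le hproj
  have hdiv : β * ((g0 (t + 1) - g1 (t + 1)) / β) = g0 (t + 1) - g1 (t + 1) :=
    mul_div_cancel₀ _ hβ.ne'
  linear_combination hscaled - (z - cchase β g0 g1 (t + 1)) * hdiv

end cchase

/-- The cost of a single round with operating costs `p` in state `0` and `q` in state `1`, in which
the schedule moves from `x` to `x'` before paying the operating cost. -/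
noncomputable def roundCost (β p q x x' : ℝ) : ℝ :=
  (1 - x') * p + x' * q + β * max (x' - x) 0

@[simp]
theorem cost_zero (β : ℝ) (g0 g1 x : ℕ → ℝ) : cost 0 β g0 g1 x = 0 := by
  simp [cost]

theorem cost_succ (T : ℕ) (β : ℝ) (g0 g1 x : ℕ → ℝ) :
    cost (T + 1) β g0 g1 x =
      cost T β g0 g1 x + roundCost β (g0 (T + 1)) (g1 (T + 1)) (x T) (x (T + 1)) := by
  simp only [cost, roundCost, Finset.sum_Icc_succ_top (Nat.le_add_left 1 T), Nat.add_sub_cancel]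

theorem le_copt {T : ℕ} {β c : ℝ} {g0 g1 : ℕ → ℝ}
    (h : ∀ y : ℕ → ℝ, (∀ t, y t ∈ Icc (0 : ℝ) 1) → y 0 = 0 → c ≤ cost T β g0 g1 y) :
    c ≤ copt T β g0 g1 := by
  refine le_csInf ⟨_, fun _ => 0, by simp, rfl, rfl⟩ ?_
  rintro _ ⟨y, hy, hy0, rfl⟩
  exact h y hy hy0

/-- The potential that amortizes the cost of cCHASE in state `a` against twice the cost of a
competitor in state `y`. -/
noncomputable def chasePotential (β a y : ℝ) : ℝ :=
  β * (a ^ 2 / 2 + 2 * y * (1 - a))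

theorem chasePotential_nonneg {β a y : ℝ} (hβ : 0 ≤ β) (ha : a ≤ 1) (hy : 0 ≤ y) :
    0 ≤ chasePotential β a y := by
  have := sub_nonneg.2 ha
  unfold chasePotential
  positivity

section round

variable {β a a' y y' p q : ℝ}

theorem chasePotential_sub_right_le (hβ : 0 ≤ β) (ha : a ∈ Icc (0 : ℝ) 1) :
    chasePotential β a y' - chasePotential β a y ≤ 2 * (β * max (y' - y) 0) := by
  have hmove : (y' - y) * (1 - a) ≤ max (y' - y) 0 :=
    calc (y' - y) * (1 - a) ≤ max (y' - y) 0 * (1 - a) :=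
          mul_le_mul_of_nonneg_right (le_max_left _ _) (sub_nonneg.2 ha.2)
      _ ≤ max (y' - y) 0 :=
          mul_le_of_le_one_right (le_max_right _ _) (sub_le_self _ ha.1)
  unfold chasePotential
  linear_combination 2 * β * hmove

theorem mul_max_zero_le_of_mul_sq_le {d : ℝ} (hp : 0 ≤ p) (hq : 0 ≤ q)
    (h : β * d ^ 2 ≤ (p - q) * d) : β * max d 0 ≤ p := by
  rcases le_or_gt d 0 with hd | hd
  · rwa [max_eq_right hd, mul_zero]
  · have hslope : β * d ≤ p - q := le_of_mul_le_mul_right (by linarith) hd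
    rw [max_eq_left hd.le]
    linarith

theorem mul_max_sub_add_chasePotential_sub_left_le (hβ : 0 ≤ β) (hp : 0 ≤ p) (hq : 0 ≤ q)
    (ha' : a' ∈ Icc (0 : ℝ) 1) (h : β * (a' - a) ^ 2 ≤ (p - q) * (a' - a)) :
    β * max (a' - a) 0 + (chasePotential β a' y' - chasePotential β a y') ≤
      (1 - a') * p + a' * q + 2 * (β * (a' - a) * (a' - y')) := by
  have hup : β * max (a' - a) 0 ≤ p := mul_max_zero_le_of_mul_sq_le hp hq h
  have hdown : β * max (-(a' - a)) 0 ≤ q := mul_max_zero_le_of_mul_sq_le hq hp (by linarith)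
  have hsplit : max (a' - a) 0 - max (-(a' - a)) 0 = a' - a := posPart_sub_negPart (a' - a)
  have hsq : 0 ≤ β * (a' - a) ^ 2 := by positivity
  unfold chasePotential
  have hweight : 0 ≤ 1 - a' := sub_nonneg.2 ha'.2
  have hweight' : 0 ≤ a' := ha'.1
  linear_combination (1 - a') * hup + a' * hdown + hsq / 2 + β * a' * hsplit

theorem roundCost_add_chasePotential_le (hβ : 0 ≤ β) (hp : 0 ≤ p) (hq : 0 ≤ q)
    (ha : a ∈ Icc (0 : ℝ) 1) (ha' : a' ∈ Icc (0 : ℝ) 1) (hy' : y' ∈ Icc (0 : ℝ) 1)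
    (h : ∀ z ∈ Icc (0 : ℝ) 1, (p - q) * (z - a') ≤ β * (a' - a) * (z - a')) :
    roundCost β p q a a' + chasePotential β a' y' ≤
      2 * roundCost β p q y y' + chasePotential β a y := by
  have hcompetitor : chasePotential β a y' - chasePotential β a y ≤ 2 * (β * max (y' - y) 0) :=
    chasePotential_sub_right_le hβ ha
  have hchase := mul_max_sub_add_chasePotential_sub_left_le (a := a) (y' := y') hβ hp hq ha'
    (by linarith [h a ha])
  have hoperating : (1 - a') * p + a' * q + β * (a' - a) * (a' - y') ≤ (1 - y') * p + y' * q := by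
    linarith [h y' hy']
  unfold roundCost
  linarith

end round

theorem cost_cchase_add_chasePotential_le {T : ℕ} {β : ℝ} {g0 g1 y : ℕ → ℝ} (hβ : 0 < β)
    (hg0 : ∀ t, 1 ≤ t → t ≤ T → 0 ≤ g0 t) (hg1 : ∀ t, 1 ≤ t → t ≤ T → 0 ≤ g1 t)
    (hy : ∀ t, y t ∈ Icc (0 : ℝ) 1) (hy0 : y 0 = 0) :
    cost T β g0 g1 (cchase β g0 g1) + chasePotential β (cchase β g0 g1 T) (y T) ≤
      2 * cost T β g0 g1 y := by
  induction T with
  | zero => simp [chasePotential, hy0]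
  | succ T ih =>
    have hprev := ih (fun t h1 hT => hg0 t h1 (Nat.le_succ_of_le hT))
      (fun t h1 hT => hg1 t h1 (Nat.le_succ_of_le hT))
    have hround := roundCost_add_chasePotential_le (y := y T) hβ.le
      (hg0 (T + 1) (Nat.le_add_left 1 T) le_rfl) (hg1 (T + 1) (Nat.le_add_left 1 T) le_rfl)
      (cchase_mem_Icc hβ T) (cchase_mem_Icc hβ (T + 1)) (hy (T + 1))
      (fun _ hz => mul_sub_cchase_succ_le hβ T hz)
    rw [cost_succ, cost_succ]
    linarith

/-- the continuous online algorithm cCHASE, which plays the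
fractional state `x_t = (β + Δ(t))/β`, is 2-competitive for the fractional
problem cSP. -/
theorem stmt5 (T : ℕ) (β : ℝ) (hβ : 0 < β) (g0 g1 : ℕ → ℝ)
    (hg0 : ∀ t, 1 ≤ t → t ≤ T → 0 ≤ g0 t) (hg1 : ∀ t, 1 ≤ t → t ≤ T → 0 ≤ g1 t) :
    cost T β g0 g1 (fun t => (β + Δfun β g0 g1 t) / β) ≤ 2 * copt T β g0 g1 := by
  suffices hhalf : cost T β g0 g1 (cchase β g0 g1) / 2 ≤ copt T β g0 g1 from
    (div_le_iff₀' two_pos).1 hhalf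
  refine le_copt fun y hy hy0 => ?_
  have hamortized := cost_cchase_add_chasePotential_le hβ hg0 hg1 hy hy0
  have hpotential := chasePotential_nonneg hβ.le
    (cchase_mem_Icc (g0 := g0) (g1 := g1) hβ T).2 (hy T).1
  linarith
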